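/- In every web Γ = (D, A, B) there exists a wave that is maximal with respect to the forward-extension order; moreover, every wave in Γ can be forward-extended to such a maximal wave. Here a wave U forward-extends a wave W (written W ⪯⃗ U) if V[W] ⊆ V[U], E[W] ⊆ E[U], and in[W] = in[U]. -/

import Mathlib

/-!
The proof applies Zorn's lemma to the waves that forward-extend a given wave; the trivial wave
`{(a) : a ∈ A}` then yields the existence of a maximal wave.

For a nonempty `⪯⃗`-chain `c` of waves with common set of initial vertices `I`, let `F` be the union
of the edge sets of its members. Any two edges in `F` lie in a common member of `c`, so
every vertex has at most one successor and at most one predecessor under `F`, and vertices of `I ⊆ A`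
have no predecessor. Hence the `F`-orbits of the vertices in `I` are pairwise disjoint finite or
infinite paths (`exists_orbit_path`), and they form a warp extending every member of `c`.

This limit warp is a wave: if no vertex of a given `A`–`B` path `p` were terminal in it, then each
of the finitely many vertices `s` of `p` either lies on no member of `c` or has a successor in some
member of `c`, hence in all later ones. So `s` is not terminal in any sufficiently late member, and a
member late enough for all vertices of `p` has a terminal set that misses `p`, a contradiction
(`chain_bound`).

Finite and infinite paths are treated uniformly through the partial sequence `GPath.nth`.
-/

namespace ErdosMenger

variable {V : Type*}

/-- A finite path in a digraph with edge relation `E`: a nonempty list of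
distinct vertices, each consecutive pair of which is a directed edge. -/
def IsFinPath (E : V → V → Prop) (p : List V) : Prop :=
  p ≠ [] ∧ p.Nodup ∧ p.Chain' E

/-- An `X`–`Y` path: a finite path starting in `X` and ending in `Y`. -/
def IsXYPath (E : V → V → Prop) (X Y : Set V) (p : List V) : Prop :=
  IsFinPath E p ∧ (∃ x ∈ X, p.head? = some x) ∧ (∃ y ∈ Y, p.getLast? = some y)

/-- `S` is `X`–`Y`-separating: every `X`–`Y` path contains a vertex of `S`. -/
def Separates (E : V → V → Prop) (X Y S : Set V) : Prop :=
  ∀ p : List V, IsXYPath E X Y p → ∃ s ∈ S, s ∈ p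


/-- A path in a digraph: either finite (a list of vertices) or infinite
(a sequence of vertices). -/
inductive GPath (V : Type*) where
  | fin : List V → GPath V
  | inf : (ℕ → V) → GPath V

namespace GPath

variable {V : Type*}

/-- The predicate that a `GPath` really is a path of the digraph with edge
relation `E`: finite paths are nonempty lists of distinct vertices whose
consecutive pairs are edges; infinite paths are injective sequences whose
consecutive pairs are edges. -/
def IsPath (E : V → V → Prop) : GPath V → Prop
  | .fin l => l ≠ [] ∧ l.Nodup ∧ l.Chain' E
  | .inf f => Function.Injective f ∧ ∀ n, E (f n) (f (n + 1))

/-- The vertex set of a path. -/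
def verts : GPath V → Set V
  | .fin l => {v | v ∈ l}
  | .inf f => Set.range f

/-- The initial vertex of a path. -/
def initv : GPath V → Option V
  | .fin l => l.head?
  | .inf f => some (f 0)

/-- The terminal vertex of a (finite) path. -/
def terv : GPath V → Option V
  | .fin l => l.getLast?
  | .inf _ => none

/-- The edge set of a path. -/
def edges : GPath V → Set (V × V)
  | .fin l => {e | e ∈ l.zip l.tail}
  | .inf f => {e | ∃ n, e = (f n, f (n + 1))}

end GPath

variable {V : Type*}

/-- `in[W]`: the set of initial vertices of the paths of `W`. -/
def warpIn (W : Set (GPath V)) : Set V := {v | ∃ P ∈ W, P.initv = some v}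

/-- `ter[W]`: the set of terminal vertices of the finite paths of `W`. -/
def warpTer (W : Set (GPath V)) : Set V := {v | ∃ P ∈ W, P.terv = some v}

/-- `V[W]`: the set of vertices appearing on paths of `W`. -/
def warpVerts (W : Set (GPath V)) : Set V := {v | ∃ P ∈ W, v ∈ P.verts}

/-- `E[W]`: the set of edges appearing on paths of `W`. -/
def warpEdges (W : Set (GPath V)) : Set (V × V) := {e | ∃ P ∈ W, e ∈ P.edges}

/-- A web `Γ = (D, A, B)`: a digraph together with vertex sets `A` and `B`,
such that no edge enters `A` and no edge leaves `B`. -/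
structure Web (V : Type*) where
  Adj : V → V → Prop
  A : Set V
  B : Set V
  not_into_A : ∀ u v, Adj u v → v ∉ A
  not_from_B : ∀ u v, Adj u v → u ∉ B

namespace Web

variable (Γ : Web V)

/-- A warp: a set of pairwise vertex-disjoint paths of the web. -/
def IsWarp (W : Set (GPath V)) : Prop :=
  (∀ P ∈ W, P.IsPath Γ.Adj) ∧
    ∀ P ∈ W, ∀ Q ∈ W, P ≠ Q → ∀ v, v ∈ P.verts → v ∉ Q.verts

/-- A wave: an `A`-starting warp `W` such that `ter[W]` is `A`–`B`-separating. -/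
def IsWave (W : Set (GPath V)) : Prop :=
  Γ.IsWarp W ∧ warpIn W ⊆ Γ.A ∧ Separates Γ.Adj Γ.A Γ.B (warpTer W)

/-- A hindrance: a wave with `in[W] ≠ A`. -/
def IsHindrance (W : Set (GPath V)) : Prop :=
  Γ.IsWave W ∧ warpIn W ≠ Γ.A

/-- A web is hindered if it contains a hindrance. -/
def Hindered : Prop := ∃ W, Γ.IsHindrance W

/-- An `A`–`B`-warp: a set of pairwise disjoint finite `A`–`B` paths, each
meeting `A ∪ B` only at its endpoints. -/
def IsABWarp (𝒲 : Set (List V)) : Prop :=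
  (∀ p ∈ 𝒲, IsXYPath Γ.Adj Γ.A Γ.B p) ∧
    (∀ p ∈ 𝒲, ∀ v ∈ p, v ∈ Γ.A ∪ Γ.B → p.head? = some v ∨ p.getLast? = some v) ∧
    ∀ p ∈ 𝒲, ∀ q ∈ 𝒲, p ≠ q → ∀ v, v ∈ p → v ∉ q

/-- A linkage of `Γ`: an `A`–`B`-warp whose set of initial vertices is all of `A`. -/
def IsLinkage (𝒲 : Set (List V)) : Prop :=
  Γ.IsABWarp 𝒲 ∧ {v | ∃ p ∈ 𝒲, p.head? = some v} = Γ.A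

/-- A web is linkable if it has a linkage. -/
def Linkable : Prop := ∃ 𝒲, Γ.IsLinkage 𝒲

/-- The web `Γ − X` obtained by deleting the vertices of `X`. -/
def delete (X : Set V) : Web V where
  Adj u v := Γ.Adj u v ∧ u ∉ X ∧ v ∉ X
  A := Γ.A \ X
  B := Γ.B \ X
  not_into_A := fun u v h hv => Γ.not_into_A u v h.1 hv.1
  not_from_B := fun u v h hu => Γ.not_from_B u v h.1 hu.1

end Web


/-- The forward-extension order on warps: `U` forward-extends `W` if
`V[W] ⊆ V[U]`, `E[W] ⊆ E[U]` and `in[W] = in[U]`. -/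
def FwdExt (W U : Set (GPath V)) : Prop :=
  warpVerts W ⊆ warpVerts U ∧ warpEdges W ⊆ warpEdges U ∧ warpIn W = warpIn U

/-! ### Paths as partial sequences -/

/-- The `n`-th vertex of a path, `none` beyond the end of a finite path. -/
def GPath.nth : GPath V → ℕ → Option V
  | .fin l, n => l[n]?
  | .inf f, n => some (f n)

lemma GPath.initv_eq (P : GPath V) : P.initv = P.nth 0 := by
  cases P with
  | fin l => simp [initv, nth, List.head?_eq_getElem?]
  | inf f => rfl

lemma GPath.mem_verts {P : GPath V} {v : V} : v ∈ P.verts ↔ ∃ n, P.nth n = some v := by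
  cases P with
  | fin l => simp [verts, nth, List.mem_iff_getElem?]
  | inf f => simp [verts, nth]

lemma GPath.mem_edges {P : GPath V} {u v : V} :
    (u, v) ∈ P.edges ↔ ∃ n, P.nth n = some u ∧ P.nth (n + 1) = some v := by
  cases P with
  | fin l => simp [edges, nth, List.mem_iff_getElem?, List.getElem?_zip_eq_some]
  | inf f =>
    simp only [edges, nth, Set.mem_ofPred_eq, Prod.mk.injEq, Option.some.injEq]
    exact exists_congr fun n => by grind

lemma GPath.terv_eq {P : GPath V} {v : V} :
    P.terv = some v ↔ ∃ n, P.nth n = some v ∧ P.nth (n + 1) = none := by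
  cases P with
  | fin l =>
    simp only [terv, nth, List.getLast?_eq_getElem?, List.getElem?_eq_none_iff]
    constructor
    · intro h
      exact ⟨l.length - 1, h, by omega⟩
    · rintro ⟨n, h, hn⟩
      have := (List.getElem?_eq_some_iff.1 h).1
      rwa [show l.length - 1 = n by omega]
  | inf f => simp [terv, nth]

lemma GPath.isPath_iff {E : V → V → Prop} {P : GPath V} :
    P.IsPath E ↔ P.nth 0 ≠ none ∧ (∀ m n v, P.nth m = some v → P.nth n = some v → m = n) ∧
      ∀ n u v, P.nth n = some u → P.nth (n + 1) = some v → E u v := by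
  cases P with
  | fin l =>
    refine and_congr (by simp [nth]) (and_congr ?_ ?_)
    · simp only [nth]
      constructor
      · intro h m n v hm hn
        obtain ⟨hm, rfl⟩ := List.getElem?_eq_some_iff.1 hm
        obtain ⟨hn, hv⟩ := List.getElem?_eq_some_iff.1 hn
        exact (h.getElem_inj_iff.1 hv).symm
      · intro h
        rw [List.nodup_iff_getElem?_ne_getElem?]
        intro i j hij hj heq
        have := h i j l[j] (heq.trans (List.getElem?_eq_getElem hj)) (List.getElem?_eq_getElem hj)
        omega
    · change List.IsChain E l ↔ _
      rw [List.isChain_iff_getElem]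
      simp only [nth, List.getElem?_eq_some_iff]
      constructor
      · rintro h n u v ⟨_, rfl⟩ ⟨h2, rfl⟩
        exact h n h2
      · intro h n hn
        exact h n _ _ ⟨by omega, rfl⟩ ⟨hn, rfl⟩
  | inf f =>
    simp only [IsPath, nth, ne_eq, reduceCtorEq, not_false_eq_true, true_and, Option.some.injEq]
    refine and_congr ⟨fun h m n v hm hn => h (hm.trans hn.symm), fun h m n e => h m n _ e rfl⟩
      ⟨?_, fun h n => h n _ _ rfl rfl⟩
    rintro h n u v rfl rfl
    exact h n

/-- Every partial sequence whose domain is an initial segment of `ℕ` comes from a `GPath`. -/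
lemma GPath.exists_nth_eq (g : ℕ → Option V) (hg : ∀ n, g n = none → g (n + 1) = none) :
    ∃ P : GPath V, ∀ n, P.nth n = g n := by
  classical
  by_cases h : ∃ n, g n = none
  · have hup : ∀ n, Nat.find h ≤ n → g n = none := by
      intro n hn
      induction n, hn using Nat.le_induction with
      | base => exact Nat.find_spec h
      | succ n _ ih => exact hg n ih
    refine ⟨.fin ((List.range (Nat.find h)).filterMap g), fun n => ?_⟩
    have hlist : ∀ N, (∀ n < N, g n ≠ none) → ∀ n, ((List.range N).filterMap g)[n]? =
        if n < N then g n else none := by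
      intro N
      induction N with
      | zero => simp
      | succ N ih =>
        intro hN n
        have ih' := ih (fun n hn => hN n (by omega))
        have hlen : ((List.range N).filterMap g).length = N := by
          apply le_antisymm
          · simpa using List.length_filterMap_le g (List.range N)
          · by_contra! hlt
            have h1 := ih' ((List.range N).filterMap g).length
            rw [if_pos hlt] at h1
            exact hN _ (by omega) (h1.symm.trans (by simp))
        obtain ⟨x, hx⟩ := Option.ne_none_iff_exists'.1 (hN N (by omega))
        rw [List.range_succ, List.filterMap_append, List.getElem?_append, hlen]
        simp only [List.filterMap_cons, hx, List.filterMap_nil]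
        rcases lt_trichotomy n N with h | h | h
        · rw [if_pos h, ih', if_pos h, if_pos (by omega)]
        · subst h; simp [hx]
        · rw [if_neg (by omega), if_neg (by omega)]
          simp; omega
    change ((List.range (Nat.find h)).filterMap g)[n]? = g n
    rw [hlist _ (fun m hm => Nat.find_min h hm)]
    split_ifs with hn
    · rfl
    · exact (hup n (by omega)).symm
  · push Not at h
    choose f hf using fun n => Option.ne_none_iff_exists'.1 (h n)
    exact ⟨.inf f, fun n => (hf n).symm⟩

lemma GPath.nth_none_succ (P : GPath V) {n : ℕ} (h : P.nth n = none) : P.nth (n + 1) = none := by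
  cases P with
  | fin l => simp only [nth, List.getElem?_eq_none_iff] at *; omega
  | inf f => simp [nth] at h

/-! ### The path traced out by a vertex under a partial injection -/

/-- If `F` is a partial injection and `a` has no `F`-predecessor, then the vertices reachable from
`a` along `F` form a path that stops only where `F` does. -/
lemma exists_orbit_path {E F : V → V → Prop} (hFE : ∀ u v, F u v → E u v)
    (hfun : ∀ u v w, F u v → F u w → v = w) (hinj : ∀ u v w, F u w → F v w → u = v)
    {a : V} (ha : ∀ u, ¬ F u a) :
    ∃ P : GPath V, P.IsPath E ∧ P.initv = some a ∧
      (∀ v, v ∈ P.verts ↔ Relation.ReflTransGen F a v) ∧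
      (∀ u v, (u, v) ∈ P.edges ↔ Relation.ReflTransGen F a u ∧ F u v) ∧
      ∀ v, Relation.ReflTransGen F a v → (∀ w, ¬ F v w) → P.terv = some v := by
  classical
  let next : V → Option V := fun v => if h : ∃ w, F v w then some h.choose else none
  have next_some : ∀ u v, next u = some v ↔ F u v := by
    intro u v
    by_cases h : ∃ w, F u w
    · simp only [next, dif_pos h, Option.some.injEq]
      exact ⟨fun e => e ▸ h.choose_spec, fun hv => hfun _ _ _ h.choose_spec hv⟩
    · simp only [next, dif_neg h, reduceCtorEq, false_iff]
      exact fun hv => h ⟨v, hv⟩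
  let g : ℕ → Option V := fun n => Nat.rec (some a) (fun _ o => o.bind next) n
  have g0 : g 0 = some a := rfl
  have gs : ∀ n, g (n + 1) = (g n).bind next := fun _ => rfl
  obtain ⟨P, hP⟩ := GPath.exists_nth_eq g (fun n h => by rw [gs, h]; rfl)
  have P0 : P.nth 0 = some a := (hP 0).trans g0
  have Ps : ∀ n v, P.nth (n + 1) = some v ↔ ∃ u, P.nth n = some u ∧ F u v := by
    intro n v
    simp only [hP, gs, Option.bind_eq_some_iff, next_some]
  have hverts : ∀ v, (∃ n, P.nth n = some v) ↔ Relation.ReflTransGen F a v := by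
    intro v
    constructor
    · rintro ⟨n, hn⟩
      induction n generalizing v with
      | zero =>
        obtain rfl : a = v := Option.some.inj (P0.symm.trans hn)
        exact .refl
      | succ n ih =>
        obtain ⟨u, hu, huv⟩ := (Ps n v).1 hn
        exact (ih u hu).tail huv
    · intro h
      induction h with
      | refl => exact ⟨0, P0⟩
      | tail _ huv ih =>
        obtain ⟨n, hn⟩ := ih
        exact ⟨n + 1, (Ps n _).2 ⟨_, hn, huv⟩⟩
  have hstep : ∀ n u v, P.nth n = some u → P.nth (n + 1) = some v → F u v := by
    intro n u v hu hv
    obtain ⟨u', hu', h⟩ := (Ps n v).1 hv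
    obtain rfl : u = u' := Option.some.inj (hu.symm.trans hu')
    exact h
  refine ⟨P, GPath.isPath_iff.2 ⟨by simp [P0], ?_, fun n u v hu hv => hFE _ _ (hstep n u v hu hv)⟩,
    (P.initv_eq).trans P0, fun v => GPath.mem_verts.trans (hverts v), ?_, ?_⟩
  · -- A repeated vertex could be pulled back along `F` until `a` had a predecessor.
    intro m
    induction m with
    | zero =>
      intro n v hm hn
      cases n with
      | zero => rfl
      | succ n =>
        obtain ⟨u, _, hu⟩ := (Ps n v).1 hn
        obtain rfl : a = v := Option.some.inj (P0.symm.trans hm)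
        exact (ha u hu).elim
    | succ m ih =>
      intro n v hm hn
      obtain ⟨u, hum, hu⟩ := (Ps m v).1 hm
      cases n with
      | zero =>
        obtain rfl : a = v := Option.some.inj (P0.symm.trans hn)
        exact (ha u hu).elim
      | succ n =>
        obtain ⟨u', hun, hu'⟩ := (Ps n v).1 hn
        obtain rfl := hinj _ _ _ hu hu'
        rw [ih n u hum hun]
  · intro u v
    rw [GPath.mem_edges, ← hverts]
    constructor
    · rintro ⟨n, hu, hv⟩
      exact ⟨⟨n, hu⟩, hstep n u v hu hv⟩
    · rintro ⟨⟨n, hu⟩, h⟩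
      exact ⟨n, hu, (Ps n v).2 ⟨u, hu, h⟩⟩
  · intro v hv hmax
    obtain ⟨n, hn⟩ := (hverts v).2 hv
    refine GPath.terv_eq.2 ⟨n, hn, ?_⟩
    by_contra h
    obtain ⟨w, hw⟩ := Option.ne_none_iff_exists'.1 h
    exact hmax w (hstep n v w hn hw)

/-! ### Edges and vertices of a warp -/

variable {Γ : Web V} {W : Set (GPath V)}

lemma Web.IsWarp.eq_of_mem (h : Γ.IsWarp W) {P Q : GPath V} (hP : P ∈ W) (hQ : Q ∈ W) {v : V}
    {m n : ℕ} (hm : P.nth m = some v) (hn : Q.nth n = some v) : P = Q ∧ m = n := by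
  have hPQ : P = Q := by
    by_contra hne
    exact h.2 P hP Q hQ hne v (GPath.mem_verts.2 ⟨m, hm⟩) (GPath.mem_verts.2 ⟨n, hn⟩)
  subst hPQ
  exact ⟨rfl, (GPath.isPath_iff.1 (h.1 P hP)).2.1 m n v hm hn⟩

lemma Web.IsWarp.edge_right_unique (h : Γ.IsWarp W) {u v w : V} (hv : (u, v) ∈ warpEdges W)
    (hw : (u, w) ∈ warpEdges W) : v = w := by
  obtain ⟨P, hP, hPe⟩ := hv
  obtain ⟨Q, hQ, hQe⟩ := hw
  obtain ⟨m, hm, hm'⟩ := GPath.mem_edges.1 hPe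
  obtain ⟨n, hn, hn'⟩ := GPath.mem_edges.1 hQe
  obtain ⟨rfl, rfl⟩ := h.eq_of_mem hP hQ hm hn
  exact Option.some.inj (hm'.symm.trans hn')

lemma Web.IsWarp.edge_left_unique (h : Γ.IsWarp W) {u v w : V} (hu : (u, w) ∈ warpEdges W)
    (hv : (v, w) ∈ warpEdges W) : u = v := by
  obtain ⟨P, hP, hPe⟩ := hu
  obtain ⟨Q, hQ, hQe⟩ := hv
  obtain ⟨m, hm, hm'⟩ := GPath.mem_edges.1 hPe
  obtain ⟨n, hn, hn'⟩ := GPath.mem_edges.1 hQe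
  obtain ⟨rfl, hmn⟩ := h.eq_of_mem hP hQ hm' hn'
  obtain rfl : m = n := by omega
  exact Option.some.inj (hm.symm.trans hn)

lemma Web.IsWarp.adj_of_edge (h : Γ.IsWarp W) {u v : V} (huv : (u, v) ∈ warpEdges W) :
    Γ.Adj u v := by
  obtain ⟨P, hP, hPe⟩ := huv
  obtain ⟨m, hm, hm'⟩ := GPath.mem_edges.1 hPe
  exact (GPath.isPath_iff.1 (h.1 P hP)).2.2 m u v hm hm'

lemma Web.IsWarp.not_ter_of_edge (h : Γ.IsWarp W) {u v : V} (huv : (u, v) ∈ warpEdges W) :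
    u ∉ warpTer W := by
  rintro ⟨Q, hQ, hter⟩
  obtain ⟨P, hP, hPe⟩ := huv
  obtain ⟨m, hm, hm'⟩ := GPath.mem_edges.1 hPe
  obtain ⟨n, hn, hn'⟩ := GPath.terv_eq.1 hter
  obtain ⟨rfl, rfl⟩ := h.eq_of_mem hP hQ hm hn
  simp [hm'] at hn'

lemma warpTer_subset_warpVerts : warpTer W ⊆ warpVerts W := by
  rintro v ⟨P, hP, hter⟩
  obtain ⟨n, hn, _⟩ := GPath.terv_eq.1 hter
  exact ⟨P, hP, GPath.mem_verts.2 ⟨n, hn⟩⟩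

lemma left_mem_warpVerts {u v : V} (h : (u, v) ∈ warpEdges W) : u ∈ warpVerts W := by
  obtain ⟨P, hP, hPe⟩ := h
  obtain ⟨m, hm, _⟩ := GPath.mem_edges.1 hPe
  exact ⟨P, hP, GPath.mem_verts.2 ⟨m, hm⟩⟩

lemma Web.IsWarp.reachable (h : Γ.IsWarp W) {v : V} (hv : v ∈ warpVerts W) :
    ∃ a ∈ warpIn W, Relation.ReflTransGen (fun x y => (x, y) ∈ warpEdges W) a v := by
  obtain ⟨P, hP, hvP⟩ := hv
  obtain ⟨n, hn⟩ := GPath.mem_verts.1 hvP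
  obtain ⟨a, ha⟩ := Option.ne_none_iff_exists'.1 (GPath.isPath_iff.1 (h.1 P hP)).1
  refine ⟨a, ⟨P, hP, P.initv_eq.trans ha⟩, ?_⟩
  clear hvP
  induction n generalizing v with
  | zero =>
    obtain rfl : a = v := Option.some.inj (ha.symm.trans hn)
    exact .refl
  | succ n ih =>
    obtain ⟨u, hu⟩ : ∃ u, P.nth n = some u := by
      refine Option.ne_none_iff_exists'.1 fun hnone => ?_
      simp [P.nth_none_succ hnone] at hn
    exact (ih hu).tail ⟨P, hP, GPath.mem_edges.2 ⟨n, hu, hn⟩⟩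

/-! ### Upper bounds of chains -/

lemma FwdExt.refl (W : Set (GPath V)) : FwdExt W W := ⟨subset_rfl, subset_rfl, rfl⟩

lemma FwdExt.trans {W U X : Set (GPath V)} (h : FwdExt W U) (hUX : FwdExt U X) : FwdExt W X :=
  ⟨h.1.trans hUX.1, h.2.1.trans hUX.2.1, h.2.2.trans hUX.2.2⟩

/-- A nonempty chain of waves has an upper bound: the warp of orbits of the common initial vertices
under the union of all edge sets. -/
lemma chain_bound {c : Set (Set (GPath V))} (hc : IsChain FwdExt c) (hne : c.Nonempty)
    (hw : ∀ U ∈ c, Γ.IsWave U) : ∃ L, Γ.IsWave L ∧ ∀ U ∈ c, FwdExt U L := by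
  obtain ⟨U₀, hU₀⟩ := hne
  have dir : ∀ U ∈ c, ∀ U' ∈ c, ∃ X ∈ c, FwdExt U X ∧ FwdExt U' X := by
    intro U hU U' hU'
    by_cases h : U = U'
    · subst h
      exact ⟨U, hU, .refl _, .refl _⟩
    · rcases hc hU hU' h with h | h
      · exact ⟨U', hU', h, .refl _⟩
      · exact ⟨U, hU, .refl _, h⟩
  have hin : ∀ U ∈ c, warpIn U = warpIn U₀ := by
    intro U hU
    obtain ⟨X, _, h, h'⟩ := dir U hU U₀ hU₀
    exact h.2.2.trans h'.2.2.symm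
  let F : V → V → Prop := fun x y => ∃ U ∈ c, (x, y) ∈ warpEdges U
  have hFA : ∀ u v, F u v → Γ.Adj u v := by
    rintro u v ⟨U, hU, h⟩
    exact (hw U hU).1.adj_of_edge h
  have hfun : ∀ u v w, F u v → F u w → v = w := by
    rintro u v w ⟨U, hU, h⟩ ⟨U', hU', h'⟩
    obtain ⟨X, hX, hUX, hUX'⟩ := dir U hU U' hU'
    exact (hw X hX).1.edge_right_unique (hUX.2.1 h) (hUX'.2.1 h')
  have hinj : ∀ u v w, F u w → F v w → u = v := by
    rintro u v w ⟨U, hU, h⟩ ⟨U', hU', h'⟩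
    obtain ⟨X, hX, hUX, hUX'⟩ := dir U hU U' hU'
    exact (hw X hX).1.edge_left_unique (hUX.2.1 h) (hUX'.2.1 h')
  have hI : ∀ a ∈ warpIn U₀, ∀ u, ¬ F u a := fun a ha u h =>
    Γ.not_into_A u a (hFA u a h) ((hw U₀ hU₀).2.1 ha)
  have : Nonempty (GPath V) := ⟨.fin []⟩
  choose! path hpath hinit hverts hedges hter using
    fun a (ha : a ∈ warpIn U₀) => exists_orbit_path hFA hfun hinj (hI a ha)
  -- Orbits of distinct initial vertices are disjoint, as `F` is injective.
  have hdisj : ∀ a ∈ warpIn U₀, ∀ b ∈ warpIn U₀, ∀ v, Relation.ReflTransGen F a v →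
      Relation.ReflTransGen F b v → a = b := by
    intro a ha b hb v hav
    induction hav with
    | refl =>
      intro h
      rcases h.cases_tail with h | ⟨u, _, h⟩
      · exact h
      · exact (hI a ha u h).elim
    | tail _ huv ih =>
      intro h
      rcases h.cases_tail with rfl | ⟨u, hu, h⟩
      · exact (hI _ hb _ huv).elim
      · obtain rfl := hinj _ _ _ huv h
        exact ih hu
  let L : Set (GPath V) := path '' warpIn U₀
  have hreach : ∀ U ∈ c, ∀ v ∈ warpVerts U,
      ∃ a ∈ warpIn U₀, Relation.ReflTransGen F a v := by
    intro U hU v hv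
    obtain ⟨a, ha, h⟩ := (hw U hU).1.reachable hv
    exact ⟨a, hin U hU ▸ ha, h.lift id fun x y hxy => ⟨U, hU, hxy⟩⟩
  have hLin : warpIn L = warpIn U₀ := by
    ext v
    constructor
    · rintro ⟨_, ⟨a, ha, rfl⟩, h⟩
      obtain rfl : a = v := Option.some.inj ((hinit a ha).symm.trans h)
      exact ha
    · intro hv
      exact ⟨path v, ⟨v, hv, rfl⟩, hinit v hv⟩
  refine ⟨L, ⟨⟨?_, ?_⟩, hLin ▸ (hw U₀ hU₀).2.1, ?_⟩, fun U hU => ⟨?_, ?_, (hin U hU).trans hLin.symm⟩⟩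
  · rintro _ ⟨a, ha, rfl⟩
    exact hpath a ha
  · rintro _ ⟨a, ha, rfl⟩ _ ⟨b, hb, rfl⟩ hab v hva hvb
    exact hab (congrArg path
      (hdisj a ha b hb v ((hverts a ha v).1 hva) ((hverts b hb v).1 hvb)))
  · intro p hp
    by_contra! hcon
    have hlate : ∀ s, s ∉ warpTer L → ∃ U ∈ c, ∀ X ∈ c, FwdExt U X → s ∉ warpTer X := by
      intro s hs
      by_cases h : ∃ U ∈ c, ∃ w, (s, w) ∈ warpEdges U
      · obtain ⟨U, hU, w, hw'⟩ := h
        exact ⟨U, hU, fun X hX hUX => (hw X hX).1.not_ter_of_edge (hUX.2.1 hw')⟩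
      · refine ⟨U₀, hU₀, fun X hX _ hsX => hs ?_⟩
        obtain ⟨a, ha, hav⟩ := hreach X hX s (warpTer_subset_warpVerts hsX)
        exact ⟨path a, ⟨a, ha, rfl⟩, hter a ha s hav fun w ⟨U, hU, hUw⟩ => h ⟨U, hU, w, hUw⟩⟩
    have hall : ∀ q : List V, (∀ s ∈ q, s ∉ warpTer L) →
        ∃ U ∈ c, ∀ X ∈ c, FwdExt U X → ∀ s ∈ q, s ∉ warpTer X := by
      intro q
      induction q with
      | nil => exact fun _ => ⟨U₀, hU₀, by simp⟩
      | cons s q ih =>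
        intro hq
        obtain ⟨U, hU, h⟩ := ih fun t ht => hq t (List.mem_cons_of_mem _ ht)
        obtain ⟨U', hU', h'⟩ := hlate s (hq s List.mem_cons_self)
        obtain ⟨Y, hY, hUY, hUY'⟩ := dir U hU U' hU'
        refine ⟨Y, hY, fun X hX hYX t ht => ?_⟩
        rcases List.mem_cons.1 ht with rfl | ht
        · exact h' X hX (hUY'.trans hYX)
        · exact h X hX (hUY.trans hYX) t ht
    obtain ⟨U, hU, h⟩ := hall p fun s hs hsL => hcon s hsL hs
    obtain ⟨s, hs, hsp⟩ := (hw U hU).2.2 p hp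
    exact h U hU (.refl U) s hsp hs
  · intro v hv
    obtain ⟨a, ha, h⟩ := hreach U hU v hv
    exact ⟨path a, ⟨a, ha, rfl⟩, (hverts a ha v).2 h⟩
  · rintro ⟨u, v⟩ huv
    obtain ⟨a, ha, h⟩ := hreach U hU u (left_mem_warpVerts huv)
    exact ⟨path a, ⟨a, ha, rfl⟩, (hedges a ha u v).2 ⟨h, U, hU, huv⟩⟩

lemma exists_maximal_extension (hW : Γ.IsWave W) :
    ∃ M : Set (GPath V), Γ.IsWave M ∧ FwdExt W M ∧
      ∀ U : Set (GPath V), Γ.IsWave U → FwdExt M U → FwdExt U M := by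
  let S := {U : Set (GPath V) // Γ.IsWave U ∧ FwdExt W U}
  have : Nonempty S := ⟨⟨W, hW, .refl W⟩⟩
  have hbound : ∀ c : Set S, IsChain (fun X Y : S => FwdExt X.1 Y.1) c → c.Nonempty →
      ∃ ub : S, ∀ X ∈ c, FwdExt X.1 ub.1 := by
    intro c hc hne
    have hc' : IsChain FwdExt (Subtype.val '' c) := by
      rintro _ ⟨X, hX, rfl⟩ _ ⟨Y, hY, rfl⟩ hXY
      exact hc hX hY fun h => hXY (congrArg _ h)
    have hw : ∀ U ∈ Subtype.val '' c, Γ.IsWave U := by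
      rintro _ ⟨X, _, rfl⟩
      exact X.2.1
    obtain ⟨L, hL, hub⟩ := chain_bound hc' (hne.image _) hw
    obtain ⟨X, hX⟩ := hne
    exact ⟨⟨L, hL, X.2.2.trans (hub _ ⟨X, hX, rfl⟩)⟩, fun Y hY => hub _ ⟨Y, hY, rfl⟩⟩
  obtain ⟨⟨M, hM, hWM⟩, hmax⟩ :=
    exists_maximal_of_nonempty_chains_bounded hbound (fun h h' => h.trans h')
  exact ⟨M, hM, hWM, fun U hU hMU => hmax ⟨U, hU, hWM.trans hMU⟩ hMU⟩

/-- The trivial paths `(a)` with `a ∈ A` form a wave. -/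
lemma isWave_trivial (Γ : Web V) : Γ.IsWave ((fun a => GPath.fin [a]) '' Γ.A) := by
  refine ⟨⟨?_, ?_⟩, ?_, ?_⟩
  · rintro _ ⟨a, _, rfl⟩
    exact ⟨by simp, by simp, List.isChain_singleton a⟩
  · rintro _ ⟨a, _, rfl⟩ _ ⟨b, _, rfl⟩ hab v hva hvb
    simp only [GPath.verts, List.mem_singleton, Set.mem_ofPred_eq] at hva hvb
    exact hab (by rw [← hva, ← hvb])
  · rintro v ⟨_, ⟨a, ha, rfl⟩, h⟩
    obtain rfl : a = v := by simpa [GPath.initv] using h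
    exact ha
  · rintro p ⟨_, ⟨x, hx, hp⟩, _⟩
    exact ⟨x, ⟨_, ⟨x, hx, rfl⟩, rfl⟩, List.mem_of_head? hp⟩

/-- In every web there exists a wave maximal with respect to the
forward-extension order; moreover, every wave can be forward-extended to such
a maximal wave. -/
theorem maximal_wave_exists (V : Type*) (Γ : Web V) :
    (∃ M : Set (GPath V), Γ.IsWave M ∧
      ∀ U : Set (GPath V), Γ.IsWave U → FwdExt M U → FwdExt U M) ∧
    (∀ W : Set (GPath V), Γ.IsWave W →
      ∃ M : Set (GPath V), Γ.IsWave M ∧ FwdExt W M ∧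
        ∀ U : Set (GPath V), Γ.IsWave U → FwdExt M U → FwdExt U M) := by
  refine ⟨?_, fun W hW => exists_maximal_extension hW⟩
  obtain ⟨M, hM, _, hmax⟩ := exists_maximal_extension (isWave_trivial Γ)
  exact ⟨M, hM, hmax⟩

end ErdosMenger
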